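/- Satisfiability of SHIN⁺-concepts with respect to role hierarchies is undecidable: over a countable effectively encoded signature, there is no computable function f such that, for every SHIN⁺-concept C and every finite set R of role inclusion axioms, f(C, R) = true if and only if C is satisfiable with respect to R⁺. -/

import Mathlib

/-- SHIQ-roles: role names (indexed by ℕ) and their inverses. -/
inductive Role where
  | atom : ℕ → Role
  | inv  : ℕ → Role
deriving DecidableEq

/-- The function `Inv` on roles: `Inv(R) = R⁻`, `Inv(R⁻) = R`. -/
def Role.Inv : Role → Role
  | .atom r => .inv r
  | .inv r  => .atom r

/-- The underlying role name of a (possibly inverse) role. -/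
def Role.name : Role → ℕ
  | .atom r => r
  | .inv r  => r

/-- Concepts of the SHIQ family (with ⊤ and ⊥ for convenience). -/
inductive DLConcept where
  | top : DLConcept
  | bot : DLConcept
  | atom : ℕ → DLConcept
  | neg : DLConcept → DLConcept
  | and : DLConcept → DLConcept → DLConcept
  | or : DLConcept → DLConcept → DLConcept
  | all : Role → DLConcept → DLConcept
  | ex : Role → DLConcept → DLConcept
  | atleast : ℕ → Role → DLConcept → DLConcept
  | atmost : ℕ → Role → DLConcept → DLConcept
deriving DecidableEq

/-- An interpretation: a (nonempty) domain, a valuation of concept names and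
    of role names. -/
structure Interp where
  Dom : Type
  dom_nonempty : Nonempty Dom
  cI : ℕ → Set Dom
  rI : ℕ → Dom → Dom → Prop

/-- Semantics of (possibly inverse) roles. -/
def Interp.rSem (I : Interp) : Role → I.Dom → I.Dom → Prop
  | .atom r => I.rI r
  | .inv r  => fun x y => I.rI r y x

/-- Semantics of concepts; number restrictions are interpreted by counting
    role successors (via cardinalities, so that infinite sets are handled
    correctly). -/
def Interp.cSem (I : Interp) : DLConcept → Set I.Dom
  | .top => Set.univ
  | .bot => ∅
  | .atom a => I.cI a
  | .neg C => (I.cSem C)ᶜ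
  | .and C D => I.cSem C ∩ I.cSem D
  | .or C D => I.cSem C ∪ I.cSem D
  | .all R C => {x | ∀ y, I.rSem R x y → y ∈ I.cSem C}
  | .ex R C => {x | ∃ y, I.rSem R x y ∧ y ∈ I.cSem C}
  | .atleast n R C => {x | (n : Cardinal) ≤ Cardinal.mk {y // I.rSem R x y ∧ y ∈ I.cSem C}}
  | .atmost n R C => {x | Cardinal.mk {y // I.rSem R x y ∧ y ∈ I.cSem C} ≤ (n : Cardinal)}

/-- `I.Good Rp`: the interpretation interprets every transitive role name
    (member of `Rp`) by a transitive relation. -/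
def Interp.Good (I : Interp) (Rp : Set ℕ) : Prop :=
  ∀ r ∈ Rp, Transitive (I.rI r)

/-- The role hierarchy ⊑* generated by a finite set of role inclusion axioms:
    inverses are added and the transitive-reflexive closure is taken. -/
def SubRole (RIA : List (Role × Role)) : Role → Role → Prop :=
  Relation.ReflTransGen (fun R S => (R, S) ∈ RIA ∨ (R.Inv, S.Inv) ∈ RIA)

/-- `I ⊨ R⁺`: the interpretation satisfies the role hierarchy. -/
def Interp.ModelsRH (I : Interp) (RIA : List (Role × Role)) : Prop :=
  ∀ R S, SubRole RIA R S → ∀ x y, I.rSem R x y → I.rSem S x y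

/-- `Trans(R)`: a (possibly inverse) role is transitive iff its name is in `Rp`. -/
def RTrans (Rp : Set ℕ) : Role → Prop
  | .atom r => r ∈ Rp
  | .inv r  => r ∈ Rp

/-- A role is simple iff it is neither transitive nor has a transitive sub-role. -/
def SimpleRole (Rp : Set ℕ) (RIA : List (Role × Role)) (R : Role) : Prop :=
  ∀ S, SubRole RIA S R → ¬ RTrans Rp S

/-- SHIQ-concepts: number restrictions occur only on simple roles. -/
def DLConcept.IsSHIQ (Rp : Set ℕ) (RIA : List (Role × Role)) : DLConcept → Prop
  | .top | .bot | .atom _ => True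
  | .neg C => C.IsSHIQ Rp RIA
  | .and C D | .or C D => C.IsSHIQ Rp RIA ∧ D.IsSHIQ Rp RIA
  | .all _ C | .ex _ C => C.IsSHIQ Rp RIA
  | .atleast _ R C | .atmost _ R C => SimpleRole Rp RIA R ∧ C.IsSHIQ Rp RIA

/-- Satisfiability of a concept w.r.t. a role hierarchy. -/
def Satisfiable (Rp : Set ℕ) (RIA : List (Role × Role)) (C : DLConcept) : Prop :=
  ∃ I : Interp, I.Good Rp ∧ I.ModelsRH RIA ∧ (I.cSem C).Nonempty

/-- Subsumption of concepts w.r.t. a role hierarchy. -/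
def Subsumes (Rp : Set ℕ) (RIA : List (Role × Role)) (C D : DLConcept) : Prop :=
  ∀ I : Interp, I.Good Rp → I.ModelsRH RIA → I.cSem C ⊆ I.cSem D

/-- An effective encoding of roles. -/
def Role.code : Role → ℕ
  | .atom n => 2 * n
  | .inv n => 2 * n + 1

/-- An effective encoding of concepts. -/
def DLConcept.code : DLConcept → ℕ
  | .top => Nat.pair 0 0
  | .bot => Nat.pair 1 0
  | .atom a => Nat.pair 2 a
  | .neg C => Nat.pair 3 C.code
  | .and C D => Nat.pair 4 (Nat.pair C.code D.code)
  | .or C D => Nat.pair 5 (Nat.pair C.code D.code)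
  | .all R C => Nat.pair 6 (Nat.pair R.code C.code)
  | .ex R C => Nat.pair 7 (Nat.pair R.code C.code)
  | .atleast n R C => Nat.pair 8 (Nat.pair n (Nat.pair R.code C.code))
  | .atmost n R C => Nat.pair 9 (Nat.pair n (Nat.pair R.code C.code))

/-- An effective encoding of lists of naturals. -/
def natListCode : List ℕ → ℕ
  | [] => 0
  | a :: l => Nat.pair a (natListCode l) + 1

/-- An effective encoding of finite sets of role inclusion axioms. -/
def riaCode (RIA : List (Role × Role)) : ℕ :=
  natListCode (RIA.map fun p => Nat.pair p.1.code p.2.code)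

/-- The fixed set of transitive role names: the even role names (so that both the
transitive role names and the other role names form countably infinite,
effectively decidable sets). -/
def evenRp : Set ℕ := {n | n % 2 = 0}

/-- SHIN⁺-concepts: number restrictions are unqualified (the qualifying concept is
`⊤`) but may use ARBITRARY (possibly transitive, possibly inverse) roles. -/
def DLConcept.IsSHINplus : DLConcept → Prop
  | .top | .bot | .atom _ => True
  | .neg C => C.IsSHINplus
  | .and C D | .or C D => C.IsSHINplus ∧ D.IsSHINplus
  | .all _ C | .ex _ C => C.IsSHINplus
  | .atleast _ _ C | .atmost _ _ C => C = DLConcept.top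

/-!
The halting problem is expressed by monadic Horn programs on the grid `ℕ ^ ι`. A `k`-ary relation
of naturals is read as a predicate of grid points that depends on `k` of the coordinates. Horn
programs define its least fixed points, hence recursion, and six coordinates suffice for the graphs
of all partial recursive functions.

Each Horn rule is a concept to be asserted at every reachable point, so it remains to force the
reachable points to form a grid, i.e. to make the steps along different dimensions commute. The
step roles are split by the parity of the coordinate they change, so that no step role can be
followed twice in a row. In the grid, a transitive super-role of two step roles `p` and `q` along
different dimensions then has exactly three successors, namely the ends of `p`, `q` and
`p q = q p`. Requiring `≤ 3` successors of it forces `p q = q p`. A satisfiable concept is thus a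
model of the program that omits a given fact, i.e. a computation that does not halt.
-/

/-- Horn rules for monadic predicates named by `σ` on the grid `ι → ℕ`: a fact at the origin, a
conjunction in the body, and steps forward and backward along one dimension, written
`c(0)`, `a(v) ∧ b(v) → c(v)`, `a(v) → c(v + δ_d)` and `a(v + δ_d) → c(v)`. -/
inductive HornRule (ι σ : Type) where
  | origin (c : σ)
  | inter (a b c : σ)
  | up (d : ι) (a c : σ)
  | down (d : ι) (a c : σ)

section HornPrograms

variable {ι σ τ : Type} [DecidableEq ι]

namespace HornRule

/-- Validity of a Horn rule under a valuation `M` of the predicate names. -/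
def Holds (M : σ → Set (ι → ℕ)) : HornRule ι σ → Prop
  | origin c => 0 ∈ M c
  | inter a b c => ∀ v ∈ M a, v ∈ M b → v ∈ M c
  | up d a c => ∀ v ∈ M a, v + Pi.single d 1 ∈ M c
  | down d a c => ∀ v, v + Pi.single d 1 ∈ M a → v ∈ M c

/-- Renaming of the predicates of a Horn rule. -/
def map (f : σ → τ) : HornRule ι σ → HornRule ι τ
  | origin c => origin (f c)
  | inter a b c => inter (f a) (f b) (f c)
  | up d a c => up d (f a) (f c)
  | down d a c => down d (f a) (f c)

theorem holds_map (M : τ → Set (ι → ℕ)) (f : σ → τ) (r : HornRule ι σ) :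
    (r.map f).Holds M ↔ r.Holds (M ∘ f) := by
  cases r <;> rfl

end HornRule

/-- `M` is a model of the Horn program `P`. -/
def IsHornModel (M : σ → Set (ι → ℕ)) (P : List (HornRule ι σ)) : Prop :=
  ∀ r ∈ P, r.Holds M

theorem isHornModel_nil {M : σ → Set (ι → ℕ)} : IsHornModel M [] :=
  List.forall_mem_nil _

theorem isHornModel_cons {M : σ → Set (ι → ℕ)} {r : HornRule ι σ} {P : List (HornRule ι σ)} :
    IsHornModel M (r :: P) ↔ r.Holds M ∧ IsHornModel M P :=
  List.forall_mem_cons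

theorem isHornModel_append {M : σ → Set (ι → ℕ)} {P Q : List (HornRule ι σ)} :
    IsHornModel M (P ++ Q) ↔ IsHornModel M P ∧ IsHornModel M Q :=
  List.forall_mem_append

theorem isHornModel_map {M : τ → Set (ι → ℕ)} {f : σ → τ} {P : List (HornRule ι σ)} :
    IsHornModel M (P.map (.map f)) ↔ IsHornModel (M ∘ f) P := by
  simp only [IsHornModel, List.forall_mem_map, HornRule.holds_map]

/-- The operator `F` is computed by a Horn program: over an input predicate `none`, interpreted by
`X`, the least possible value of the output predicate `o` is `F X`. -/
def HornDefinable (F : Set (ι → ℕ) → Set (ι → ℕ)) : Prop :=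
  ∃ (σ : Type) (_ : Encodable σ) (P : List (HornRule ι (Option σ))) (o : σ), ∀ X,
    IsLeast {Y | ∃ M : σ → Set (ι → ℕ), IsHornModel (Option.elim · X M) P ∧ M o = Y} (F X)

namespace HornDefinable

variable {F G : Set (ι → ℕ) → Set (ι → ℕ)}

theorem of_program (P : List (HornRule ι (Option Unit)))
    (hP : ∀ X, IsLeast {Y | IsHornModel (Option.elim · X fun _ => Y) P} (F X)) :
    HornDefinable F := by
  refine ⟨Unit, inferInstance, P, (), fun X => ⟨⟨_, (hP X).1, rfl⟩, ?_⟩⟩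
  rintro _ ⟨M, hM, rfl⟩
  exact (hP X).2 hM

theorem id : HornDefinable fun X : Set (ι → ℕ) => X :=
  of_program [.inter none none (some ())] fun X => by
    simp only [isHornModel_cons, isHornModel_nil, and_true, HornRule.Holds, Option.elim]
    exact ⟨fun v hv _ => hv, fun Y hY v hv => hY v hv hv⟩

theorem origin : HornDefinable fun _ : Set (ι → ℕ) => {0} :=
  of_program [.origin (some ())] fun X => by
    simp only [isHornModel_cons, isHornModel_nil, and_true, HornRule.Holds, Option.elim]
    exact ⟨rfl, fun Y hY => Set.singleton_subset_iff.2 hY⟩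

theorem combine (hF : HornDefinable F) (hG : HornDefinable G)
    {H : Set (ι → ℕ) → Set (ι → ℕ) → Set (ι → ℕ)} (Q : List (HornRule ι (Fin 3)))
    (mono : ∀ {A A' B B'}, A ⊆ A' → B ⊆ B' → H A B ⊆ H A' B')
    (hQ : ∀ A B, IsLeast {Y | IsHornModel ![A, B, Y] Q} (H A B)) :
    HornDefinable fun X => H (F X) (G X) := by
  obtain ⟨σ, _, P₁, o₁, h₁⟩ := hF
  obtain ⟨τ, _, P₂, o₂, h₂⟩ := hG
  let left : Option σ → Option (Option (σ ⊕ τ)) := Option.map (some ∘ Sum.inl)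
  let right : Option τ → Option (Option (σ ⊕ τ)) := Option.map (some ∘ Sum.inr)
  let ports : Fin 3 → Option (Option (σ ⊕ τ)) :=
    ![some (some (.inl o₁)), some (some (.inr o₂)), some none]
  let P : List (HornRule ι (Option (Option (σ ⊕ τ)))) :=
    P₁.map (.map left) ++ P₂.map (.map right) ++ Q.map (.map ports)
  have model_iff (X : Set (ι → ℕ)) (M : Option (σ ⊕ τ) → Set (ι → ℕ)) :
      IsHornModel (Option.elim · X M) P ↔
        (IsHornModel (Option.elim · X fun s => M (some (.inl s))) P₁ ∧
          IsHornModel (Option.elim · X fun t => M (some (.inr t))) P₂) ∧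
          IsHornModel ![M (some (.inl o₁)), M (some (.inr o₂)), M none] Q := by
    have hl : (Option.elim · X M) ∘ left = (Option.elim · X fun s => M (some (.inl s))) :=
      funext fun s => by cases s <;> rfl
    have hr : (Option.elim · X M) ∘ right = (Option.elim · X fun t => M (some (.inr t))) :=
      funext fun t => by cases t <;> rfl
    have hp : (Option.elim · X M) ∘ ports =
        ![M (some (.inl o₁)), M (some (.inr o₂)), M none] :=
      funext fun j => by fin_cases j <;> rfl
    rw [isHornModel_append, isHornModel_append, isHornModel_map, isHornModel_map,
      isHornModel_map, hl, hr, hp]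
  refine ⟨Option (σ ⊕ τ), inferInstance, P, none, fun X => ⟨?_, ?_⟩⟩
  · obtain ⟨M, hM, hMo⟩ := (h₁ X).1
    obtain ⟨N, hN, hNo⟩ := (h₂ X).1
    refine ⟨(Option.elim · (H (F X) (G X)) (Sum.elim M N)),
      (model_iff X _).2 ⟨⟨hM, hN⟩, ?_⟩, rfl⟩
    rw [← hMo, ← hNo]
    exact (hQ _ _).1
  · rintro _ ⟨M, hM, rfl⟩
    obtain ⟨⟨hM₁, hM₂⟩, hMQ⟩ := (model_iff X M).1 hM
    exact (mono ((h₁ X).2 ⟨_, hM₁, rfl⟩) ((h₂ X).2 ⟨_, hM₂, rfl⟩)).trans ((hQ _ _).2 hMQ)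

theorem inter (hF : HornDefinable F) (hG : HornDefinable G) :
    HornDefinable fun X => F X ∩ G X :=
  combine hF hG [.inter 0 1 2] Set.inter_subset_inter fun A B => by
    simp only [isHornModel_cons, isHornModel_nil, and_true, HornRule.Holds]
    exact ⟨fun v hA hB => ⟨hA, hB⟩, fun Y hY v hv => hY v hv.1 hv.2⟩

theorem union (hF : HornDefinable F) (hG : HornDefinable G) :
    HornDefinable fun X => F X ∪ G X :=
  combine hF hG [.inter 0 0 2, .inter 1 1 2] Set.union_subset_union fun A B => by
    simp only [isHornModel_cons, isHornModel_nil, and_true, HornRule.Holds]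
    exact ⟨⟨fun v hv _ => .inl hv, fun v hv _ => .inr hv⟩,
      fun Y hY => Set.union_subset (fun v hv => hY.1 v hv hv) fun v hv => hY.2 v hv hv⟩

theorem image_add_single (d : ι) (hF : HornDefinable F) :
    HornDefinable fun X => (· + Pi.single d 1) '' F X :=
  combine (H := fun A _ => (· + Pi.single d 1) '' A) hF hF [.up d 0 2]
    (fun h _ => Set.image_mono h) fun A B => by
      simp only [isHornModel_cons, isHornModel_nil, and_true, HornRule.Holds]
      exact ⟨fun v hv => ⟨v, hv, rfl⟩, fun Y hY => Set.image_subset_iff.2 hY⟩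

theorem mem_of_update_mem {Y : Set (ι → ℕ)} {d : ι} (up : ∀ v ∈ Y, v + Pi.single d 1 ∈ Y)
    (down : ∀ v, v + Pi.single d 1 ∈ Y → v ∈ Y) {v : ι → ℕ} {x : ℕ}
    (h : Function.update v d x ∈ Y) : v ∈ Y := by
  have succ (m : ℕ) : Function.update v d m + Pi.single d 1 = Function.update v d (m + 1) := by
    ext e
    by_cases he : e = d <;> simp [he]
  have zero_mem : Function.update v d 0 ∈ Y := by
    induction x with
    | zero => exact h
    | succ x ih => exact ih (down _ (by rwa [succ]))
  have all_mem (m : ℕ) : Function.update v d m ∈ Y := by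
    induction m with
    | zero => exact zero_mem
    | succ m ih => exact succ m ▸ up _ ih
  simpa using all_mem (v d)

theorem exists_update (d : ι) (hF : HornDefinable F) :
    HornDefinable fun X => {v | ∃ x, Function.update v d x ∈ F X} :=
  combine (H := fun A _ => {v | ∃ x, Function.update v d x ∈ A}) hF hF
    [.inter 0 0 2, .up d 2 2, .down d 2 2] (fun h _ v hv => hv.imp fun _ hx => h hx)
    fun A B => by
      have update_add (v : ι → ℕ) (x : ℕ) :
          Function.update (v + Pi.single d 1) d x = Function.update v d x := by
        ext e
        by_cases he : e = d <;> simp [he]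
      simp only [isHornModel_cons, isHornModel_nil, and_true, HornRule.Holds]
      refine ⟨⟨fun v hv _ => ⟨v d, by simpa using hv⟩, fun v hv => ?_, fun v hv => ?_⟩,
        fun Y ⟨hA, up, down⟩ v ⟨x, hx⟩ => mem_of_update_mem up down (hA _ hx hx)⟩
      · simpa [update_add] using hv
      · simpa [update_add] using hv

/-- The output predicate of a program for `F` is fed back into its input predicate. -/
theorem const_of_isLeast (hF : HornDefinable F) {R : Set (ι → ℕ)}
    (hR : IsLeast {X | F X ⊆ X} R) : HornDefinable fun _ => R := by
  obtain ⟨σ, _, P, o, hP⟩ := hF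
  let P' : List (HornRule ι (Option (Option σ))) :=
    .inter (some (some o)) (some (some o)) (some none) :: P.map (.map some)
  have model_iff (X : Set (ι → ℕ)) (M : Option σ → Set (ι → ℕ)) :
      IsHornModel (Option.elim · X M) P' ↔
        M (some o) ⊆ M none ∧ IsHornModel (Option.elim · (M none) fun s => M (some s)) P := by
    have hM : (Option.elim · X M) ∘ some = (Option.elim · (M none) fun s => M (some s)) :=
      funext fun s => by cases s <;> rfl
    rw [isHornModel_cons, isHornModel_map, hM]
    exact and_congr_left' ⟨fun h v hv => h v hv hv, fun h v hv _ => h hv⟩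
  refine ⟨Option σ, inferInstance, P', none, fun X => ⟨?_, ?_⟩⟩
  · obtain ⟨M, hM, hMo⟩ := (hP R).1
    exact ⟨(Option.elim · R M), (model_iff X _).2 ⟨hMo.trans_subset hR.1, hM⟩, rfl⟩
  · rintro _ ⟨M, hM, rfl⟩
    obtain ⟨hMo, hMP⟩ := (model_iff X M).1 hM
    exact hR.2 (((hP _).2 ⟨_, hMP, rfl⟩).trans hMo)

theorem exists_program {R : Set (ι → ℕ)} (hR : HornDefinable fun _ => R) :
    ∃ (σ : Type) (_ : Encodable σ) (P : List (HornRule ι σ)) (o : σ), ∀ v,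
      (∃ M, IsHornModel M P ∧ v ∉ M o) ↔ v ∉ R := by
  obtain ⟨σ, _, P, o, hP⟩ := hR
  refine ⟨Option σ, inferInstance, P, some o, fun v => ⟨?_, fun hv => ?_⟩⟩
  · rintro ⟨M, hM, hv⟩ hvR
    have elim_eq : (Option.elim · (M none) fun s => M (some s)) = M :=
      funext fun s => by cases s <;> rfl
    exact hv ((hP (M none)).2 ⟨_, elim_eq ▸ hM, rfl⟩ hvR)
  · obtain ⟨M, hM, hMo⟩ := (hP ∅).1
    exact ⟨_, hM, fun h => hv (hMo.subset h)⟩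

end HornDefinable

end HornPrograms

section HornRelations

open Function

variable {ι : Type} [DecidableEq ι]

theorem hornDefinable_forall_notMem_eq_zero (K : Finset ι) :
    HornDefinable fun _ => {v : ι → ℕ | ∀ e ∉ K, v e = 0} := by
  induction K using Finset.induction with
  | empty =>
    convert HornDefinable.origin (ι := ι) using 2
    ext v
    simp [funext_iff]
  | insert d K _ ih =>
    convert ih.exists_update d using 2
    ext v
    simp only [Finset.mem_insert, not_or, Set.mem_ofPred_eq]
    refine ⟨fun hv => ⟨0, fun e he => ?_⟩, fun ⟨x, hx⟩ e ⟨hed, he⟩ => ?_⟩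
    · by_cases hed : e = d
      · simp [hed]
      · rw [update_of_ne hed, hv e ⟨hed, he⟩]
    · rw [← hx e he, update_of_ne hed]

theorem add_single_cases (v : ι → ℕ) (d : ι) : v d = 0 ∨ ∃ u : ι → ℕ, u + Pi.single d 1 = v := by
  rcases h : v d with _ | m
  · exact .inl rfl
  · refine .inr ⟨update v d m, funext fun e => ?_⟩
    by_cases he : e = d
    · subst he
      simp [h]
    · simp [he]

/-- The relation `r` on `ℕ` is definable by Horn programs over the dimensions `ι`: whichever
distinct dimensions hold its arguments, the set of grid points satisfying `r` is the value of a
constant definable operator. -/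
def HornRel (ι : Type) [DecidableEq ι] {k : ℕ} (r : (Fin k → ℕ) → Prop) : Prop :=
  ∀ c : Fin k → ι, Injective c → HornDefinable fun _ => {v : ι → ℕ | r (v ∘ c)}

namespace HornRel

variable {k : ℕ} {r s : (Fin k → ℕ) → Prop}

theorem of_iff (hr : HornRel ι r) (h : ∀ u, s u ↔ r u) : HornRel ι s :=
  (funext fun u => propext (h u) : s = r) ▸ hr

theorem reindex (hr : HornRel ι r) (m : ℕ) (σ : Fin k → Fin m) (hσ : Injective σ := by decide) :
    HornRel ι fun u => r (u ∘ σ) :=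
  fun c hc => hr (c ∘ σ) (hc.comp hσ)

theorem and (hr : HornRel ι r) (hs : HornRel ι s) : HornRel ι fun u => r u ∧ s u :=
  fun c hc => (hr c hc).inter (hs c hc)

theorem or (hr : HornRel ι r) (hs : HornRel ι s) : HornRel ι fun u => r u ∨ s u :=
  fun c hc => (hr c hc).union (hs c hc)

theorem eq_zero [Finite ι] : HornRel ι fun u : Fin 1 → ℕ => u 0 = 0 := fun c _ => by
  cases nonempty_fintype ι
  simpa using hornDefinable_forall_notMem_eq_zero (Finset.univ.erase (c 0))

theorem eq [Finite ι] : HornRel ι fun u : Fin 2 → ℕ => u 0 = u 1 := by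
  intro c hc
  have hde : c 0 ≠ c 1 := hc.ne (by decide)
  have zero (d : ι) := eq_zero ![d] (injective_of_subsingleton _)
  refine (((zero (c 0)).inter (zero (c 1))).union ((HornDefinable.id.image_add_single (c
    0)).image_add_single (c 1))).const_of_isLeast ⟨Set.union_subset ?_ ?_, fun X hX => ?_⟩
  · rintro v ⟨hd, he⟩
    exact hd.trans he.symm
  · rintro _ ⟨_, ⟨v, hv, rfl⟩, rfl⟩
    simpa [hde, hde.symm] using hv
  · intro v
    induction hm : v (c 0) generalizing v with
    | zero => exact fun hv => hX (.inl ⟨hm, hv.symm.trans hm⟩)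
    | succ m ih =>
      intro hv
      obtain h | ⟨u, rfl⟩ := add_single_cases v (c 1)
      · simp_all
      obtain h | ⟨w, rfl⟩ := add_single_cases u (c 0)
      · simp_all
      refine hX (.inr ⟨_, ⟨w, ih ?_ ?_, rfl⟩, rfl⟩)
      · simpa [hde] using hm
      · simpa [hde, hde.symm] using hv

theorem succ [Finite ι] : HornRel ι fun u : Fin 2 → ℕ => u 0 + 1 = u 1 := by
  intro c hc
  have hde : c 0 ≠ c 1 := hc.ne (by decide)
  convert (eq c hc).image_add_single (c 1) with _
  refine Set.Subset.antisymm (fun v hv => ?_) ?_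
  · obtain h | ⟨u, rfl⟩ := add_single_cases v (c 1)
    · simp_all
    · exact ⟨u, by simpa [hde] using hv, rfl⟩
  · rintro _ ⟨v, hv, rfl⟩
    simpa [hde] using hv

omit [DecidableEq ι] in
theorem exists_cons_injective [Fintype ι] (h : k < Fintype.card ι) {c : Fin k → ι}
    (hc : Injective c) : ∃ t, Injective (Fin.cons t c : Fin (k + 1) → ι) := by
  suffices ∃ t, t ∉ Set.range c from this.imp fun t ht => Fin.cons_injective_iff.2 ⟨ht, hc⟩
  contrapose! h
  simpa using Fintype.card_le_of_surjective c h

theorem ex [Fintype ι] {r : (Fin (k + 1) → ℕ) → Prop} (hr : HornRel ι r)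
    (h : k < Fintype.card ι := by decide) : HornRel ι fun u => ∃ x, r (Matrix.vecCons x u) := by
  intro c hc
  obtain ⟨t, ht⟩ := exists_cons_injective h hc
  convert (hr _ ht).exists_update t with _ v x
  have hv : update v t x ∘ Fin.cons t c = Matrix.vecCons x (v ∘ c) := by
    refine funext fun j => ?_
    cases j using Fin.cases with
    | zero => simp
    | succ j =>
      have ht : t ∉ Set.range c := (Fin.cons_injective_iff.1 ht).1
      simpa using congrFun (update_comp_eq_of_notMem_range v x ht) j
  rw [Set.mem_ofPred_eq, hv]

/-- The dimension `t` keeps the value at `i` while `i` is overwritten by `y`. -/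
theorem hornDefinable_step [Finite ι] {W : ℕ → ℕ → ℕ → ℕ → Prop} {t a n i : ι}
    (hc : Injective ![t, a, n, i])
    (hW : HornRel ι fun u : Fin 4 → ℕ => W (u 0) (u 1) (u 2) (u 3)) :
    HornDefinable fun X => {v : ι → ℕ |
      ∃ y, update (update v t (v i)) i y ∈ X ∧ W (v a) (v n) y (v i)} := by
  have hti : t ≠ i := hc.ne (a₁ := 0) (a₂ := 3) (by decide)
  have hta : t ≠ a := hc.ne (a₁ := 0) (a₂ := 1) (by decide)
  have htn : t ≠ n := hc.ne (a₁ := 0) (a₂ := 2) (by decide)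
  have hai : a ≠ i := hc.ne (a₁ := 1) (a₂ := 3) (by decide)
  have hni : n ≠ i := hc.ne (a₁ := 2) (a₂ := 3) (by decide)
  have hinj : Injective ![a, n, i, t] := by
    have : ![a, n, i, t] = ![t, a, n, i] ∘ ![1, 2, 3, 0] := by ext j; fin_cases j <;> rfl
    exact this ▸ hc.comp (by decide)
  convert ((eq ![t, i] (by simpa using hti)).inter ((HornDefinable.id.inter
    (hW ![a, n, i, t] hinj)).exists_update i)).exists_update t using 2 with X
  ext v
  simp [*, hta.symm, htn.symm, hti.symm]

theorem of_rec [Fintype ι] {B : ℕ → ℕ → Prop} {W : ℕ → ℕ → ℕ → ℕ → Prop} {r : ℕ → ℕ → ℕ → Prop}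
    (zero : ∀ a i, r a 0 i ↔ B a i)
    (succ : ∀ a n j, r a (n + 1) j ↔ ∃ i, r a n i ∧ W a n i j)
    (hB : HornRel ι fun u : Fin 2 → ℕ => B (u 0) (u 1))
    (hW : HornRel ι fun u : Fin 4 → ℕ => W (u 0) (u 1) (u 2) (u 3))
    (h : 3 < Fintype.card ι := by decide) :
    HornRel ι fun u : Fin 3 → ℕ => r (u 0) (u 1) (u 2) := by
  intro c hc
  obtain ⟨t, ht⟩ := exists_cons_injective h hc
  obtain ⟨a, n, i, rfl⟩ : ∃ a n i, c = ![a, n, i] :=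
    ⟨c 0, c 1, c 2, funext fun j => by fin_cases j <;> rfl⟩
  have han : a ≠ n := hc.ne (a₁ := 0) (a₂ := 1) (by decide)
  have hai : a ≠ i := hc.ne (a₁ := 0) (a₂ := 2) (by decide)
  have hni : n ≠ i := hc.ne (a₁ := 1) (a₂ := 2) (by decide)
  have hta : t ≠ a := ht.ne (a₁ := 0) (a₂ := 1) (by decide)
  have htn : t ≠ n := ht.ne (a₁ := 0) (a₂ := 2) (by decide)
  have hti : t ≠ i := ht.ne (a₁ := 0) (a₂ := 3) (by decide)
  refine (((eq_zero ![n] (injective_of_subsingleton _)).inter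
    (hB ![a, i] (by simpa using hai))).union
      ((hornDefinable_step ht hW).image_add_single n)).const_of_isLeast
        ⟨Set.union_subset ?_ ?_, fun X hX v => ?_⟩
  · rintro v ⟨hn : v n = 0, hv : B (v a) (v i)⟩
    change r (v a) (v n) (v i)
    rwa [hn, zero]
  · rintro _ ⟨v, ⟨y, hy, hyW⟩, rfl⟩
    have hy' : r (v a) (v n) y := by simpa [hai, hni, hti, hta.symm, htn.symm] using hy
    simpa [han, hni.symm, succ] using ⟨y, hy', hyW⟩
  · induction hm : v n generalizing v with
    | zero =>
      intro hv
      refine hX (.inl ⟨hm, ?_⟩)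
      simpa [hm, zero] using hv
    | succ m ih =>
      obtain hn | ⟨v, rfl⟩ := add_single_cases v n
      · omega
      replace hm : v n = m := by simpa using hm
      intro hv
      obtain ⟨y, hy, hyW⟩ : ∃ y, r (v a) (v n) y ∧ W (v a) (v n) y (v i) := by
        simpa [han, hni.symm, succ] using hv
      refine hX (.inr ⟨v, ⟨y, ih _ (by simp [hm, hni, htn.symm]) ?_, hyW⟩, rfl⟩)
      simpa [hai, hni, hti, hta.symm, htn.symm] using hy

end HornRel

end HornRelations

section RecursiveGraphs

namespace HornRel

theorem add : HornRel (Fin 6) fun u : Fin 3 → ℕ => u 0 + u 1 = u 2 :=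
  of_rec (r := fun a n i => a + n = i) (B := fun a i => a = i) (W := fun _ _ i j => i + 1 = j)
    (fun _ _ => Iff.rfl) (by simp [add_assoc]) eq (succ.reindex 4 ![2, 3])

theorem mul : HornRel (Fin 6) fun u : Fin 3 → ℕ => u 0 * u 1 = u 2 :=
  of_rec (r := fun a n i => a * n = i) (B := fun _ i => i = 0) (W := fun a _ i j => i + a = j)
    (by simp [eq_comm]) (by simp [mul_add]) (eq_zero.reindex 2 ![1]) (add.reindex 4 ![2, 0, 3])

theorem sq : HornRel (Fin 6) fun u : Fin 2 → ℕ => u 0 * u 0 = u 1 :=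
  ((eq.reindex 3 ![0, 1]).and (mul.reindex 3 ![0, 1, 2])).ex.of_iff fun u => by
    simp

theorem le : HornRel (Fin 6) fun u : Fin 2 → ℕ => u 0 ≤ u 1 :=
  (add.reindex 3 ![1, 0, 2]).ex.of_iff fun u => by
    simp [le_iff_exists_add, eq_comm]

theorem lt : HornRel (Fin 6) fun u : Fin 2 → ℕ => u 0 < u 1 :=
  ((succ.reindex 3 ![1, 0]).and (le.reindex 3 ![0, 2])).ex.of_iff fun u => by
    simp

theorem pair : HornRel (Fin 6) fun u : Fin 3 → ℕ => Nat.pair (u 0) (u 1) = u 2 := by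
  have below : HornRel (Fin 6) fun u : Fin 3 → ℕ => u 1 * u 1 + u 0 = u 2 :=
    ((sq.reindex 4 ![2, 0]).and (add.reindex 4 ![0, 1, 3])).ex.of_iff fun u => by simp
  have above : HornRel (Fin 6) fun u : Fin 3 → ℕ => u 0 * u 0 + u 0 + u 1 = u 2 :=
    (((sq.reindex 5 ![2, 1]).and (add.reindex 5 ![1, 2, 0])).and
      (add.reindex 5 ![0, 3, 4])).ex.ex.of_iff fun u => by simp
  refine (((lt.reindex 3 ![0, 1]).and below).or ((le.reindex 3 ![1, 0]).and above)).of_iff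
    fun u => ?_
  rcases lt_or_ge (u 0) (u 1) with h | h
  · simp [Nat.pair, h, h.not_ge]
  · simp [Nat.pair, h, h.not_gt]

theorem of_unpair {r : ℕ → ℕ → ℕ → Prop}
    (hr : HornRel (Fin 6) fun u : Fin 3 → ℕ => r (u 0) (u 1) (u 2)) :
    HornRel (Fin 6) fun u : Fin 2 → ℕ => r (u 0).unpair.1 (u 0).unpair.2 (u 1) :=
  ((pair.reindex 4 ![1, 0, 2]).and (hr.reindex 4 ![1, 0, 3])).ex.ex.of_iff fun u => by
    refine ⟨fun h => ⟨_, _, Nat.pair_unpair (u 0), h⟩, ?_⟩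
    rintro ⟨a, b, h : Nat.pair a b = u 0, hr : r a b (u 1)⟩
    rwa [← h, Nat.unpair_pair]

end HornRel

/-- The graph of the partial function `f` is definable by Horn programs. -/
def HornGraph (f : ℕ →. ℕ) : Prop :=
  HornRel (Fin 6) fun u : Fin 2 → ℕ => u 1 ∈ f (u 0)

namespace HornGraph

open HornRel

variable {f g : ℕ →. ℕ}

theorem zero : HornGraph (pure 0) :=
  (eq_zero.reindex 2 ![1]).of_iff fun _ => Part.mem_some_iff

theorem succ : HornGraph Nat.succ :=
  HornRel.succ.of_iff fun u => by simp [eq_comm]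

theorem left : HornGraph fun n => n.unpair.1 :=
  (of_unpair (r := fun a _ b => b = a) (eq.reindex 3 ![2, 0])).of_iff fun _ => Part.mem_some_iff

theorem right : HornGraph fun n => n.unpair.2 :=
  (of_unpair (r := fun _ n b => b = n) (eq.reindex 3 ![2, 1])).of_iff fun _ => Part.mem_some_iff

theorem pair (hf : HornGraph f) (hg : HornGraph g) :
    HornGraph fun n => Nat.pair <$> f n <*> g n :=
  (((hf.reindex 4 ![2, 1]).and (hg.reindex 4 ![2, 0])).and
    (HornRel.pair.reindex 4 ![1, 0, 3])).ex.ex.of_iff fun u => by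
      simp [Seq.seq, and_assoc]

theorem comp (hf : HornGraph f) (hg : HornGraph g) : HornGraph fun n => g n >>= f :=
  ((hg.reindex 3 ![1, 0]).and (hf.reindex 3 ![0, 2])).ex.of_iff fun _ => Part.mem_bind_iff

theorem apply_pair (hg : HornGraph g) :
    HornRel (Fin 6) fun u : Fin 3 → ℕ => u 2 ∈ g (Nat.pair (u 0) (u 1)) :=
  ((HornRel.pair.reindex 4 ![1, 2, 0]).and (hg.reindex 4 ![0, 3])).ex.of_iff fun u => by simp

theorem prec (hf : HornGraph f) (hg : HornGraph g) :
    HornGraph (Nat.unpaired fun a n => n.rec (f a) fun y IH => IH >>= fun i =>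
      g (Nat.pair a (Nat.pair y i))) := by
  let iter (a n : ℕ) : Part ℕ := n.rec (f a) fun y IH => IH >>= fun i => g (a.pair (y.pair i))
  have step : HornRel (Fin 6) fun u : Fin 4 → ℕ => u 3 ∈ g ((u 0).pair ((u 1).pair (u 2))) :=
    ((HornRel.pair.reindex 5 ![2, 3, 0]).and (hg.apply_pair.reindex 5 ![1, 0, 4])).ex.of_iff
      fun u => by simp
  exact of_unpair (r := fun a n i => i ∈ iter a n) (of_rec (r := fun a n i => i ∈ iter a n)
    (B := fun a i => i ∈ f a) (W := fun a n i j => j ∈ g (a.pair (n.pair i)))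
    (fun _ _ => Iff.rfl) (fun _ _ _ => Part.mem_bind_iff) hf step)

theorem rfind (hf : HornGraph f) :
    HornGraph fun a => Nat.rfind fun n => (fun m => m = 0) <$> f (Nat.pair a n) := by
  have nonzero : HornRel (Fin 6) fun u : Fin 2 → ℕ => ∃ z ∈ f (Nat.pair (u 0) (u 1)), 0 < z :=
    ((hf.apply_pair.reindex 4 ![2, 3, 0]).and ((eq_zero.reindex 4 ![1]).and
      (lt.reindex 4 ![1, 0]))).ex.ex.of_iff fun u => by simp
  have below : HornRel (Fin 6) fun u : Fin 3 → ℕ =>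
      (∀ m < u 1, ∃ z ∈ f (Nat.pair (u 0) m), 0 < z) ∧ u 2 = 0 :=
    of_rec (r := fun a n i => (∀ m < n, ∃ z ∈ f (Nat.pair a m), 0 < z) ∧ i = 0)
      (B := fun _ i => i = 0)
      (W := fun a n _ j => (∃ z ∈ f (Nat.pair a n), 0 < z) ∧ j = 0)
      (by simp) (fun a n j => by rw [Nat.forall_lt_succ_right]; simp [and_assoc])
      (eq_zero.reindex 2 ![1]) ((nonzero.reindex 4 ![0, 1]).and (eq_zero.reindex 4 ![3]))
  refine ((below.reindex 3 ![1, 2, 0]).and (hf.apply_pair.reindex 3 ![1, 2, 0])).ex.of_iff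
    fun u => Nat.mem_rfind.trans ?_
  simp [and_comm, Nat.pos_iff_ne_zero]

theorem of_partrec (hf : Nat.Partrec f) : HornGraph f := by
  induction hf with
  | zero => exact zero
  | succ => exact succ
  | left => exact left
  | right => exact right
  | pair _ _ hf hg => exact pair hf hg
  | comp _ _ hf hg => exact comp hf hg
  | prec _ _ hf hg => exact prec hf hg
  | rfind _ hf => exact rfind hf

end HornGraph

end RecursiveGraphs

section DescriptionLogic

theorem Interp.modelsRH_iff {I : Interp} {RIA : List (Role × Role)} :
    I.ModelsRH RIA ↔ ∀ p ∈ RIA, ∀ x y, I.rSem p.1 x y → I.rSem p.2 x y := by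
  have rSem_inv (R : Role) (x y : I.Dom) : I.rSem R.Inv x y ↔ I.rSem R y x := by
    cases R <;> rfl
  refine ⟨fun h p hp => h _ _ (.single (.inl hp)), fun h R S hRS => ?_⟩
  induction hRS with
  | refl => exact fun _ _ => id
  | tail _ hST ih =>
    intro x y hxy
    rcases hST with hST | hST
    · exact h _ hST x y (ih x y hxy)
    · exact (rSem_inv _ _ _).1 (h _ hST y x ((rSem_inv _ _ _).2 (ih x y hxy)))

namespace DLConcept

/-- Conjunction of a list of concepts. -/
def conj : List DLConcept → DLConcept
  | [] => top
  | C :: l => and C (conj l)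

/-- Material implication of concepts. -/
def imp (C D : DLConcept) : DLConcept :=
  or (neg C) D

variable {I : Interp} {x : I.Dom} {C D : DLConcept} {l : List DLConcept}

theorem mem_cSem_conj : x ∈ I.cSem (conj l) ↔ ∀ C ∈ l, x ∈ I.cSem C := by
  induction l with
  | nil => simp [conj, Interp.cSem]
  | cons C l ih => simp [conj, Interp.cSem, ih]

theorem mem_cSem_imp : x ∈ I.cSem (imp C D) ↔ (x ∈ I.cSem C → x ∈ I.cSem D) :=
  imp_iff_not_or.symm

theorem isSHINplus_conj : (conj l).IsSHINplus ↔ ∀ C ∈ l, C.IsSHINplus := by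
  induction l with
  | nil => simp [conj, IsSHINplus]
  | cons C l ih => simp [conj, IsSHINplus, ih]

theorem isSHINplus_imp : (imp C D).IsSHINplus ↔ C.IsSHINplus ∧ D.IsSHINplus :=
  Iff.rfl

end DLConcept

end DescriptionLogic

section GridConcept

open DLConcept

/-- A parity-typed step `(d, i)` of the grid: one unit forward along the dimension `d`, from a
point whose coordinate `d` has parity `i` (`true` for odd). -/
abbrev GridStep (ι : Type) : Type := ι × Bool

variable {ι σ : Type} [Encodable ι] [Encodable σ]

/-- The role of the parity-typed step `p`. Its odd name makes it nontransitive. -/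
def stepRole (p : GridStep ι) : Role :=
  .atom (2 * Encodable.encode p + 1)

/-- The transitive common super-role of the steps `p` and `q`, whose successors are counted to make
the two steps commute. -/
def squareRole (p q : GridStep ι) : Role :=
  .atom (2 * Encodable.encode (p, q) + 2)

/-- The transitive super-role of all steps, used to assert a concept at every reachable point. -/
def reachRole : Role :=
  .atom 0

/-- The role inclusions between steps, squares and reachability. -/
noncomputable def gridHierarchy (ι : Type) [Encodable ι] [Fintype ι] : List (Role × Role) :=
  (Finset.univ (α := GridStep ι)).toList.map (fun p => (stepRole p, reachRole)) ++
    (Finset.univ (α := GridStep ι × GridStep ι)).toList.flatMap fun (p, q) =>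
      [(stepRole p, squareRole p q), (stepRole q, squareRole p q)]

/-- The concept of the points from which the step `(d, i)` may be taken. The concept name
`2 * encode d` marks the points whose coordinate `d` is odd. -/
def parityConcept : GridStep ι → DLConcept
  | (d, true) => atom (2 * Encodable.encode d)
  | (d, false) => neg (atom (2 * Encodable.encode d))

/-- The concept name of a predicate of a Horn program. -/
def predConcept (c : σ) : DLConcept :=
  atom (2 * Encodable.encode c + 1)

/-- A step along `d` exists and flips the parity of `d`. -/
def flipAxiom (p : GridStep ι) : DLConcept :=
  imp (parityConcept p) (ex (stepRole p) (parityConcept (p.1, !p.2)))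

/-- The step `p` preserves the parity `q`. -/
def keepAxiom (p q : GridStep ι) : DLConcept :=
  imp (parityConcept q) (all (stepRole p) (parityConcept q))

/-- At most three points are reachable by the steps `p` and `q`: one for each of the two steps, and
a common one for the two orders of both. -/
def squareAxiom (p q : GridStep ι) : DLConcept :=
  imp (and (parityConcept p) (parityConcept q)) (atmost 3 (squareRole p q) top)

/-- The pairs of steps along different dimensions. -/
noncomputable def crossingSteps (ι : Type) [Fintype ι] [DecidableEq ι] :
    List (GridStep ι × GridStep ι) :=
  (Finset.univ.filter fun pq : GridStep ι × GridStep ι => pq.1.1 ≠ pq.2.1).toList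

/-- The concept of a point at which the steps are present, change the parities as they should, and
commute. -/
noncomputable def gridConcept (ι : Type) [Encodable ι] [Fintype ι] [DecidableEq ι] : DLConcept :=
  conj (Finset.univ.toList.map (flipAxiom (ι := ι)) ++
    (crossingSteps ι).map (fun (p, q) => keepAxiom p q) ++
    (crossingSteps ι).map fun (p, q) => squareAxiom p q)

variable {I : Interp}

open Classical in
/-- The parities of the coordinates of a domain element, as recorded by concept names. -/
noncomputable def parity (ι : Type) [Encodable ι] (I : Interp) (x : I.Dom) (d : ι) : Bool :=
  decide (x ∈ I.cI (2 * Encodable.encode d))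

theorem mem_cSem_parityConcept {x : I.Dom} {p : GridStep ι} :
    x ∈ I.cSem (parityConcept p) ↔ parity ι I x p.1 = p.2 := by
  rcases p with ⟨d, _ | _⟩ <;> simp [parityConcept, parity, Interp.cSem]

omit [Encodable ι] in
theorem mem_crossingSteps [Fintype ι] [DecidableEq ι] {p q : GridStep ι} :
    (p, q) ∈ crossingSteps ι ↔ p.1 ≠ q.1 := by
  simp [crossingSteps]

theorem mem_cSem_gridConcept [Fintype ι] [DecidableEq ι] {x : I.Dom} :
    x ∈ I.cSem (gridConcept ι) ↔
      (∀ d, ∃ y, I.rSem (stepRole (d, parity ι I x d)) x y ∧ parity ι I y d = !parity ι I x d) ∧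
      (∀ p y, I.rSem (stepRole p) x y → ∀ e ≠ p.1, parity ι I y e = parity ι I x e) ∧
      ∀ d e, d ≠ e → Cardinal.mk {y //
        I.rSem (squareRole (d, parity ι I x d) (e, parity ι I x e)) x y} ≤ 3 := by
  simp only [gridConcept, mem_cSem_conj, List.forall_mem_append, List.forall_mem_map,
    Prod.forall, mem_crossingSteps, flipAxiom, keepAxiom, squareAxiom, mem_cSem_imp,
    Finset.mem_toList, Finset.mem_univ, true_implies, mem_cSem_parityConcept, Interp.cSem,
    Set.mem_ofPred_eq, Set.mem_inter_iff, Set.mem_univ, and_true, and_imp, and_assoc]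
  refine and_congr (forall_congr' fun d => forall_eq') (and_congr ?_ ?_)
  · exact ⟨fun h d i y hy e he => h d i e _ he.symm rfl y hy,
      fun h d i e j hde hj y hy => (h d i y hy e hde.symm).trans hj⟩
  · exact ⟨fun h d e hde => h d _ e _ hde rfl rfl,
      fun h d i e j hde hi hj => hi ▸ hj ▸ h d e hde⟩

end GridConcept

section GridExtraction

open DLConcept Function Relation

theorem exists_forall_add_single {ι D : Type*} [Finite ι] [DecidableEq ι] (s : ι → D → D)
    (comm : ∀ d e x, s d (s e x) = s e (s d x)) (x : D) :
    ∃ g : (ι → ℕ) → D, g 0 = x ∧ ∀ v d, g (v + Pi.single d 1) = s d (g v) := by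
  cases nonempty_fintype ι
  let φ (d : ι) : Multiplicative ℕ →* Function.End D := powersHom (Function.End D) (s d)
  have commute (d e : ι) : Commute (show Function.End D from s d) (s e) := funext (comm d e)
  let Φ : (ι → Multiplicative ℕ) →* Function.End D :=
    MonoidHom.noncommPiCoprod φ fun d e _ m n => (commute d e).pow_pow m.toAdd n.toAdd
  refine ⟨fun v => Φ (fun d => .ofAdd (v d)) x, congrFun (map_one Φ) x, fun v d => ?_⟩
  have ofAdd_add_single :
      (fun e => Multiplicative.ofAdd ((v + Pi.single d 1 : ι → ℕ) e)) =
        Pi.mulSingle d (Multiplicative.ofAdd 1) * fun e => Multiplicative.ofAdd (v e) := by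
    ext e
    by_cases he : e = d
    · subst he
      simp [add_comm]
    · simp [he]
  have Φ_mulSingle : Φ (Pi.mulSingle d (Multiplicative.ofAdd 1)) = s d := by
    exact (MonoidHom.noncommPiCoprod_mulSingle _ _ _).trans (pow_one _)
  exact congrFun ((congrArg Φ ofAdd_add_single).trans
    ((map_mul Φ _ _).trans (congrArg (· * _) Φ_mulSingle))) x

theorem card_le_of_mk_subtype_le {α : Type*} {P : α → Prop} {s : Finset α} {n : ℕ}
    (hs : ∀ y ∈ s, P y) (h : Cardinal.mk {y // P y} ≤ n) : s.card ≤ n := by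
  rw [← Nat.cast_le (α := Cardinal), ← Cardinal.mk_coe_finset]
  exact (Cardinal.mk_subtype_mono hs).trans h

variable {ι : Type} [Encodable ι] {I : Interp}

theorem modelsRH_gridHierarchy [Fintype ι] : I.ModelsRH (gridHierarchy ι) ↔
    (∀ p : GridStep ι, I.rSem (stepRole p) ≤ I.rSem reachRole) ∧
      ∀ p q : GridStep ι, I.rSem (stepRole p) ⊔ I.rSem (stepRole q) ≤ I.rSem (squareRole p q) := by
  simp only [Interp.modelsRH_iff, gridHierarchy, List.forall_mem_append, List.forall_mem_map,
    List.forall_mem_flatMap, List.forall_mem_cons, List.not_mem_nil, false_implies,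
    implies_true, and_true, Finset.mem_toList, Finset.mem_univ, true_implies, sup_le_iff]
  exact and_congr Iff.rfl Prod.forall

/-- `y` is a successor of `x` in the grid along the dimension `d`: it is reached by the step along
`d` of the right parity, and of all the parities precisely that of `d` is flipped. -/
def IsGridSucc [DecidableEq ι] (I : Interp) (d : ι) (x y : I.Dom) : Prop :=
  I.rSem (stepRole (d, parity ι I x d)) x y ∧
    parity ι I y = update (parity ι I x) d (!parity ι I x d)

variable [Fintype ι] [DecidableEq ι] {x : I.Dom}

theorem exists_isGridSucc (hx : x ∈ I.cSem (gridConcept ι)) (d : ι) :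
    ∃ y, IsGridSucc I d x y := by
  obtain ⟨flip, keep, -⟩ := mem_cSem_gridConcept.1 hx
  obtain ⟨y, hxy, hy⟩ := flip d
  refine ⟨y, hxy, funext fun e => ?_⟩
  by_cases he : e = d
  · rw [he, hy, update_self]
  · rw [keep _ y hxy e he, update_of_ne he]

/-- The two corners at distance one and the two candidates for the opposite corner are successors
for the square role, and only the two candidates have the same parities. -/
theorem IsGridSucc.comm (hI : I.Good evenRp) (hH : I.ModelsRH (gridHierarchy ι))
    (hx : x ∈ I.cSem (gridConcept ι)) {d e : ι} (hde : d ≠ e) {a b a' b' : I.Dom} :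
    IsGridSucc I d x a → IsGridSucc I e a a' → IsGridSucc I e x b → IsGridSucc I d b b' →
      a' = b' := by
  classical
  rintro ⟨xa, pa⟩ ⟨aa', pa'⟩ ⟨xb, pb⟩ ⟨bb', pb'⟩
  rw [pa, update_of_ne hde.symm] at aa' pa'
  rw [pb, update_of_ne hde] at bb' pb'
  let p : GridStep ι := (d, parity ι I x d)
  let q : GridStep ι := (e, parity ι I x e)
  have trans_square {y z w : I.Dom} : I.rSem (squareRole p q) y z →
      I.rSem (squareRole p q) z w → I.rSem (squareRole p q) y w :=
    @hI (2 * Encodable.encode (p, q) + 2) (by simp [evenRp]) y z w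
  have left_le : I.rSem (stepRole p) ≤ I.rSem (squareRole p q) :=
    le_sup_left.trans ((modelsRH_gridHierarchy.1 hH).2 p q)
  have right_le : I.rSem (stepRole q) ≤ I.rSem (squareRole p q) :=
    le_sup_right.trans ((modelsRH_gridHierarchy.1 hH).2 p q)
  have corners : ∀ y ∈ ({a, b, a', b'} : Finset I.Dom), I.rSem (squareRole p q) x y := by
    simp only [Finset.forall_mem_insert, Finset.mem_singleton, forall_eq]
    exact ⟨left_le _ _ xa, right_le _ _ xb,
      trans_square (left_le _ _ xa) (right_le _ _ aa'),
      trans_square (right_le _ _ xb) (left_le _ _ bb')⟩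
  have card_le := card_le_of_mk_subtype_le corners ((mem_cSem_gridConcept.1 hx).2.2 d e hde)
  have ne_of_parity {y z : I.Dom} (c : ι) (h : parity ι I y c = !parity ι I z c) : y ≠ z := by
    rintro rfl
    simp at h
  by_contra hne
  have ab : a ≠ b := ne_of_parity d (by simp [pa, pb, hde])
  have aa : a ≠ a' := ne_of_parity e (by simp [pa, pa', hde.symm])
  have ab' : a ≠ b' := ne_of_parity e (by simp [pa, pb', hde.symm])
  have ba' : b ≠ a' := ne_of_parity d (by simp [pb, pa', hde])
  have bb : b ≠ b' := ne_of_parity d (by simp [pb, pb', hde])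
  simp [Finset.card_insert_of_notMem, *] at card_le

theorem exists_grid (hI : I.Good evenRp) (hH : I.ModelsRH (gridHierarchy ι))
    (hx : ∀ y, ReflGen (I.rSem reachRole) x y → y ∈ I.cSem (gridConcept ι)) :
    ∃ g : (ι → ℕ) → I.Dom, g 0 = x ∧ (∀ v, ReflGen (I.rSem reachRole) x (g v)) ∧
      ∀ v d, IsGridSucc I d (g v) (g (v + Pi.single d 1)) := by
  have reach_succ {y z : I.Dom} {d : ι} (hy : ReflGen (I.rSem reachRole) x y)
      (hyz : IsGridSucc I d y z) : ReflGen (I.rSem reachRole) x z := by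
    have hyz : I.rSem reachRole y z := (modelsRH_gridHierarchy.1 hH).1 _ _ _ hyz.1
    cases hy with
    | refl => exact .single hyz
    | single hxy => exact .single (hI 0 rfl hxy hyz)
  choose! s hs using fun (d : ι) y hy => exists_isGridSucc (hx y hy) d
  let t (d : ι) (y : {y // ReflGen (I.rSem reachRole) x y}) :
      {y // ReflGen (I.rSem reachRole) x y} := ⟨s d y, reach_succ y.2 (hs d y y.2)⟩
  have t_comm (d e : ι) (y) : t d (t e y) = t e (t d y) := by
    obtain rfl | hde := eq_or_ne d e
    · rfl
    · exact Subtype.ext (IsGridSucc.comm hI hH (hx y y.2) hde.symm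
        (hs e y y.2) (hs d _ (t e y).2) (hs d y y.2) (hs e _ (t d y).2))
  obtain ⟨g, g_zero, g_add⟩ := exists_forall_add_single t t_comm ⟨x, .refl⟩
  refine ⟨fun v => g v, congrArg _ g_zero, fun v => (g v).2, fun v d => ?_⟩
  change IsGridSucc I d (g v) (g (v + Pi.single d 1))
  rw [g_add]
  exact hs d _ (g v).2

end GridExtraction

section HornConcept

open DLConcept Relation

variable {ι σ : Type} [Encodable ι] [Encodable σ]

/-- The concept of the points all of whose reachable points belong to `C`, themselves included. -/
def globally (C : DLConcept) : DLConcept :=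
  and C (all reachRole C)

/-- The concept of the points whose successors along `d` belong to `C`. -/
def afterStep (d : ι) (C : DLConcept) : DLConcept :=
  and (all (stepRole (d, false)) C) (all (stepRole (d, true)) C)

/-- The local condition a Horn rule imposes on every point. -/
def ruleConcept : HornRule ι σ → DLConcept
  | .origin _ => top
  | .inter a b c => imp (and (predConcept a) (predConcept b)) (predConcept c)
  | .up d a c => imp (predConcept a) (afterStep d (predConcept c))
  | .down d a c => imp (neg (predConcept c)) (afterStep d (neg (predConcept a)))

/-- The condition a Horn rule imposes on the origin only. -/
def originConcept : HornRule ι σ → DLConcept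
  | .origin c => predConcept c
  | _ => top

/-- The concept of the origins of grids on which the Horn program `P` holds. -/
noncomputable def hornConcept [Fintype ι] [DecidableEq ι] (P : List (HornRule ι σ)) : DLConcept :=
  and (conj (P.map originConcept)) (globally (conj (gridConcept ι :: P.map ruleConcept)))

theorem isSHINplus_hornConcept [Fintype ι] [DecidableEq ι] (P : List (HornRule ι σ)) :
    (hornConcept P).IsSHINplus := by
  have parityConcept_mem (p : GridStep ι) : (parityConcept p).IsSHINplus := by
    rcases p with ⟨d, _ | _⟩ <;> trivial
  have gridConcept_mem : (gridConcept ι).IsSHINplus := by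
    simp only [gridConcept, isSHINplus_conj, List.forall_mem_append, List.forall_mem_map,
      flipAxiom, keepAxiom, squareAxiom, isSHINplus_imp, IsSHINplus, parityConcept_mem,
      implies_true, and_self]
  have origin_mem (r : HornRule ι σ) : (originConcept r).IsSHINplus := by
    cases r <;> trivial
  have rule_mem (r : HornRule ι σ) : (ruleConcept r).IsSHINplus := by
    cases r <;> simp [ruleConcept, isSHINplus_imp, predConcept, afterStep, IsSHINplus]
  simp [hornConcept, globally, IsSHINplus, isSHINplus_conj, gridConcept_mem, origin_mem, rule_mem]

variable {I : Interp} {x : I.Dom} {C : DLConcept}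

theorem mem_cSem_globally :
    x ∈ I.cSem (globally C) ↔ ∀ y, ReflGen (I.rSem reachRole) x y → y ∈ I.cSem C := by
  refine ⟨fun h y hy => ?_, fun h => ⟨h x .refl, fun y hy => h y (.single hy)⟩⟩
  cases hy with
  | refl => exact h.1
  | single hxy => exact h.2 _ hxy

theorem mem_cSem_afterStep {d : ι} :
    x ∈ I.cSem (afterStep d C) ↔ ∀ i y, I.rSem (stepRole (d, i)) x y → y ∈ I.cSem C :=
  (Bool.forall_bool (p := fun i => ∀ y, I.rSem (stepRole (d, i)) x y → y ∈ I.cSem C)).symm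

theorem holds_of_mem_cSem [DecidableEq ι] {g : (ι → ℕ) → I.Dom}
    (hg : ∀ v d, IsGridSucc I d (g v) (g (v + Pi.single d 1))) {r : HornRule ι σ}
    (origin : g 0 ∈ I.cSem (originConcept r)) (rule : ∀ v, g v ∈ I.cSem (ruleConcept r)) :
    r.Holds fun c => {v | g v ∈ I.cSem (predConcept c)} := by
  cases r with
  | origin c => exact origin
  | inter a b c => exact fun v ha hb => mem_cSem_imp.1 (rule v) ⟨ha, hb⟩
  | up d a c =>
    exact fun v ha => mem_cSem_afterStep.1 (mem_cSem_imp.1 (rule v) ha) _ _ (hg v d).1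
  | down d a c =>
    refine fun v ha => by_contra fun hc => ?_
    exact mem_cSem_afterStep.1 (mem_cSem_imp.1 (rule v) hc) _ _ (hg v d).1 ha

theorem exists_isHornModel_of_mem_cSem [Fintype ι] [DecidableEq ι] {P : List (HornRule ι σ)}
    (hI : I.Good evenRp) (hH : I.ModelsRH (gridHierarchy ι)) (hx : x ∈ I.cSem (hornConcept P)) :
    ∃ g : (ι → ℕ) → I.Dom, g 0 = x ∧
      (∀ v d, IsGridSucc I d (g v) (g (v + Pi.single d 1))) ∧
      IsHornModel (fun c => {v | g v ∈ I.cSem (predConcept c)}) P := by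
  obtain ⟨origin, global⟩ := hx
  simp only [mem_cSem_globally, mem_cSem_conj, List.forall_mem_cons, List.forall_mem_map]
    at origin global
  obtain ⟨g, g_zero, reach, succ⟩ := exists_grid hI hH fun y hy => (global y hy).1
  exact ⟨g, g_zero, succ, fun r hr => holds_of_mem_cSem succ (g_zero ▸ origin r hr)
    fun v => (global _ (reach v)).2 r hr⟩

theorem mem_cSem_of_mem_iterate_afterStep [DecidableEq ι] {g : (ι → ℕ) → I.Dom}
    (hg : ∀ v d, IsGridSucc I d (g v) (g (v + Pi.single d 1))) {d : ι} {n : ℕ} {v : ι → ℕ}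
    (h : g v ∈ I.cSem ((afterStep d)^[n] C)) : g (v + Pi.single d n) ∈ I.cSem C := by
  induction n generalizing v with
  | zero => simpa using h
  | succ n ih =>
    rw [Function.iterate_succ_apply'] at h
    have := ih (mem_cSem_afterStep.1 h _ _ (hg v d).1)
    rwa [add_assoc, ← Pi.single_add, add_comm 1] at this

end HornConcept

section GridInterpretation

open DLConcept Relation

variable {ι σ : Type} [Encodable ι] [Encodable σ] [DecidableEq ι] {M : σ → Set (ι → ℕ)}
  {v w : ι → ℕ} {p q : GridStep ι} {C : DLConcept}

/-- The step relation on the grid itself. -/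
def StepRel (p : GridStep ι) (v w : ι → ℕ) : Prop :=
  (v p.1).bodd = p.2 ∧ w = v + Pi.single p.1 1

/-- The grid as an interpretation, with the predicate names interpreted by `M`. -/
abbrev gridInterp (M : σ → Set (ι → ℕ)) : Interp where
  Dom := ι → ℕ
  dom_nonempty := ⟨0⟩
  cI n := {v | (∃ d, n = 2 * Encodable.encode d ∧ (v d).bodd) ∨
    ∃ c, n = 2 * Encodable.encode c + 1 ∧ v ∈ M c}
  rI n v w := n = 0 ∨ (∃ p : GridStep ι, n = 2 * Encodable.encode p + 1 ∧ StepRel p v w) ∨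
    ∃ p q : GridStep ι, n = 2 * Encodable.encode (p, q) + 2 ∧
      TransGen (StepRel p ⊔ StepRel q) v w

theorem rSem_reachRole : (gridInterp M).rSem reachRole v w :=
  .inl rfl

theorem rSem_stepRole : (gridInterp M).rSem (stepRole p) v w ↔ StepRel p v w := by
  refine ⟨?_, fun h => .inr (.inl ⟨p, rfl, h⟩)⟩
  rintro (h | ⟨q, hq, h⟩ | ⟨q, r, hq, -⟩)
  · omega
  · rwa [Encodable.encode_injective (by omega : Encodable.encode p = Encodable.encode q)]
  · omega

theorem rSem_squareRole :
    (gridInterp M).rSem (squareRole p q) v w ↔ TransGen (StepRel p ⊔ StepRel q) v w := by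
  refine ⟨?_, fun h => .inr (.inr ⟨p, q, rfl, h⟩)⟩
  rintro (h | ⟨r, hr, -⟩ | ⟨p', q', hpq, h⟩)
  · omega
  · omega
  · obtain ⟨rfl, rfl⟩ : p = p' ∧ q = q' := Prod.ext_iff.1 <| Encodable.encode_injective
      (by omega : Encodable.encode (p, q) = Encodable.encode (p', q'))
    exact h

theorem good_gridInterp : (gridInterp M).Good evenRp := by
  rintro n hn u v w (rfl | ⟨p, rfl, -⟩ | ⟨p, q, rfl, huv⟩) hvw
  · exact .inl rfl
  · simp [evenRp, Nat.add_mod] at hn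
  · exact rSem_squareRole.2 (huv.trans (rSem_squareRole.1 hvw))

theorem modelsRH_gridInterp [Fintype ι] : (gridInterp M).ModelsRH (gridHierarchy ι) :=
  modelsRH_gridHierarchy.2 ⟨fun _ _ _ _ => rSem_reachRole, fun _ _ => sup_le
    (fun _ _ h => rSem_squareRole.2 (.single (.inl (rSem_stepRole.1 h))))
    fun _ _ h => rSem_squareRole.2 (.single (.inr (rSem_stepRole.1 h)))⟩

theorem mem_cSem_predConcept {c : σ} : v ∈ (gridInterp M).cSem (predConcept c) ↔ v ∈ M c := by
  refine ⟨?_, fun h => .inr ⟨c, rfl, h⟩⟩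
  rintro (⟨d, hd, -⟩ | ⟨c', hc, h⟩)
  · omega
  · rwa [Encodable.encode_injective (by omega : Encodable.encode c = Encodable.encode c')]

theorem parity_gridInterp : parity ι (gridInterp M) v = fun d => (v d).bodd := by
  have mem_cI (d : ι) : v ∈ (gridInterp M).cI (2 * Encodable.encode d) ↔ (v d).bodd := by
    refine ⟨?_, fun h => .inl ⟨d, rfl, h⟩⟩
    rintro (⟨e, he, h⟩ | ⟨c, hc, -⟩)
    · rwa [Encodable.encode_injective (by omega : Encodable.encode d = Encodable.encode e)]
    · omega
  exact funext fun d => Bool.eq_iff_iff.2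
    ((mem_cSem_parityConcept (p := (d, true))).symm.trans (mem_cI d))

omit [Encodable ι] in
theorem corner_of_transGen {d e : ι} (hde : d ≠ e)
    (h : TransGen (StepRel (d, (v d).bodd) ⊔ StepRel (e, (v e).bodd)) v w) :
    w = v + Pi.single d 1 ∨ w = v + Pi.single e 1 ∨ w = v + Pi.single d 1 + Pi.single e 1 := by
  induction h with
  | single h => exact h.imp And.right fun h => .inl h.2
  | tail _ h ih =>
    rcases h with ⟨parity_eq, rfl⟩ | ⟨parity_eq, rfl⟩ <;> rcases ih with rfl | rfl | rfl <;>
      simp [hde, hde.symm, add_right_comm] at parity_eq ⊢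

theorem mem_cSem_gridConcept_gridInterp [Fintype ι] :
    v ∈ (gridInterp M).cSem (gridConcept ι) := by
  rw [mem_cSem_gridConcept]
  simp only [parity_gridInterp, rSem_stepRole, rSem_squareRole]
  refine ⟨fun d => ⟨_, ⟨rfl, rfl⟩, by simp⟩, ?_, fun d e hde => ?_⟩
  · rintro p _ ⟨-, rfl⟩ e he
    simp [he]
  · calc Cardinal.mk {w // TransGen (StepRel (d, (v d).bodd) ⊔ StepRel (e, (v e).bodd)) v w}
        ≤ Cardinal.mk ({v + Pi.single d 1, v + Pi.single e 1,
            v + Pi.single d 1 + Pi.single e 1} : Set (ι → ℕ)) :=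
          Cardinal.mk_subtype_mono fun _ => corner_of_transGen hde
      _ ≤ 1 + 1 + 1 := Cardinal.mk_insert_le.trans (add_le_add_left
          (Cardinal.mk_insert_le.trans (add_le_add_left (Cardinal.mk_singleton _).le 1)) 1)
      _ ≤ 3 := by norm_num

theorem mem_cSem_afterStep_gridInterp {d : ι} :
    v ∈ (gridInterp M).cSem (afterStep d C) ↔ v + Pi.single d 1 ∈ (gridInterp M).cSem C :=
  mem_cSem_afterStep.trans ⟨fun h => h (v d).bodd _ (rSem_stepRole.2 ⟨rfl, rfl⟩),
    fun h _ _ hw => (rSem_stepRole.1 hw).2 ▸ h⟩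

theorem mem_cSem_iterate_afterStep_gridInterp {d : ι} {n : ℕ} :
    v ∈ (gridInterp M).cSem ((afterStep d)^[n] C) ↔ v + Pi.single d n ∈ (gridInterp M).cSem C := by
  induction n generalizing v with
  | zero => simp
  | succ n ih =>
    rw [Function.iterate_succ_apply', mem_cSem_afterStep_gridInterp, ih, add_assoc, ← Pi.single_add,
      add_comm 1]

theorem mem_cSem_ruleConcept_of_holds {r : HornRule ι σ} (h : r.Holds M) :
    v ∈ (gridInterp M).cSem (ruleConcept r) := by
  cases r with
  | origin c => trivial
  | inter a b c =>
    refine mem_cSem_imp.2 fun ⟨ha, hb⟩ => mem_cSem_predConcept.2 ?_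
    exact h v (mem_cSem_predConcept.1 ha) (mem_cSem_predConcept.1 hb)
  | up d a c =>
    refine mem_cSem_imp.2 fun ha => mem_cSem_afterStep_gridInterp.2 (mem_cSem_predConcept.2 ?_)
    exact h v (mem_cSem_predConcept.1 ha)
  | down d a c =>
    refine mem_cSem_imp.2 fun hc => mem_cSem_afterStep_gridInterp.2 fun ha => hc ?_
    exact mem_cSem_predConcept.2 (h v (mem_cSem_predConcept.1 ha))

theorem mem_cSem_originConcept_of_holds {r : HornRule ι σ} (h : r.Holds M) :
    (0 : ι → ℕ) ∈ (gridInterp M).cSem (originConcept r) := by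
  cases r with
  | origin c => exact mem_cSem_predConcept.2 h
  | inter | up | down => trivial

theorem mem_cSem_hornConcept_of_isHornModel [Fintype ι] {P : List (HornRule ι σ)}
    (hM : IsHornModel M P) : (0 : ι → ℕ) ∈ (gridInterp M).cSem (hornConcept P) := by
  refine ⟨mem_cSem_conj.2 ?_, mem_cSem_globally.2 fun v _ => mem_cSem_conj.2 ?_⟩
  · exact List.forall_mem_map.2 fun r hr => mem_cSem_originConcept_of_holds (hM r hr)
  · exact List.forall_mem_cons.2 ⟨mem_cSem_gridConcept_gridInterp,
      List.forall_mem_map.2 fun r hr => mem_cSem_ruleConcept_of_holds (hM r hr)⟩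

end GridInterpretation

section Reduction

open DLConcept

variable {ι σ : Type} [Encodable ι] [Encodable σ] [Fintype ι] [DecidableEq ι]

/-- The concept of the origins of grids on which the Horn program `P` holds, but the predicate `o`
fails at the point with the coordinate `n` along `d` and all other coordinates zero. -/
noncomputable def refutationConcept (P : List (HornRule ι σ)) (o : σ) (d : ι) (n : ℕ) :
    DLConcept :=
  and (hornConcept P) ((afterStep d)^[n] (neg (predConcept o)))

theorem satisfiable_refutationConcept_iff {P : List (HornRule ι σ)} {o : σ} {d : ι} {n : ℕ} :
    Satisfiable evenRp (gridHierarchy ι) (refutationConcept P o d n) ↔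
      ∃ M, IsHornModel M P ∧ Pi.single d n ∉ M o := by
  constructor
  · rintro ⟨I, hI, hH, x, hP, ho⟩
    obtain ⟨g, rfl, hg, hM⟩ := exists_isHornModel_of_mem_cSem hI hH hP
    exact ⟨_, hM, zero_add (Pi.single d n : ι → ℕ) ▸ mem_cSem_of_mem_iterate_afterStep hg ho⟩
  · rintro ⟨M, hM, ho⟩
    refine ⟨gridInterp M, good_gridInterp, modelsRH_gridInterp, 0,
      mem_cSem_hornConcept_of_isHornModel hM,
      mem_cSem_iterate_afterStep_gridInterp.2 fun h => ho ?_⟩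
    exact mem_cSem_predConcept.1 (zero_add (Pi.single d n : ι → ℕ) ▸ h)

theorem isSHINplus_refutationConcept (P : List (HornRule ι σ)) (o : σ) (d : ι) (n : ℕ) :
    (refutationConcept P o d n).IsSHINplus := by
  refine ⟨isSHINplus_hornConcept P, ?_⟩
  induction n with
  | zero => trivial
  | succ n ih =>
    rw [Function.iterate_succ_apply']
    exact ⟨ih, ih⟩

theorem primrec_code_refutationConcept (P : List (HornRule ι σ)) (o : σ) (d : ι) :
    Primrec fun n => (refutationConcept P o d n).code := by
  let afterStepCode (m : ℕ) : ℕ :=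
    Nat.pair 4 (Nat.pair (Nat.pair 6 (Nat.pair (stepRole (d, false)).code m))
      (Nat.pair 6 (Nat.pair (stepRole (d, true)).code m)))
  have pair_const (k : ℕ) {f : ℕ → ℕ} (hf : Primrec f) : Primrec fun m => Nat.pair k (f m) :=
    Primrec₂.natPair.comp (.const k) hf
  have primrec_all (R : Role) : Primrec fun m => Nat.pair 6 (Nat.pair R.code m) :=
    pair_const 6 (pair_const R.code .id)
  have primrec_afterStepCode : Primrec afterStepCode :=
    pair_const 4 (Primrec₂.natPair.comp (primrec_all _) (primrec_all _))
  have code_afterStep : Function.Semiconj code (afterStep d) afterStepCode := fun _ => rfl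
  have primrec_iterate : Primrec fun n => afterStepCode^[n] (neg (predConcept o)).code :=
    Primrec.nat_iterate .id (.const _) (primrec_afterStepCode.comp .snd)
  refine (pair_const 4 (pair_const (hornConcept P).code primrec_iterate)).of_eq fun n => ?_
  rw [← code_afterStep.iterate_right n]
  rfl

theorem exists_program_of_partrec {f : ℕ →. ℕ} (hf : Nat.Partrec f) :
    ∃ (σ : Type) (_ : Encodable σ) (P : List (HornRule (Fin 6) σ)) (o : σ), ∀ n,
      (∃ M, IsHornModel M P ∧ Pi.single 0 n ∉ M o) ↔ ¬ (f n).Dom := by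
  have dom : HornRel (Fin 6) fun u : Fin 1 → ℕ => (f (u 0)).Dom :=
    ((HornGraph.of_partrec hf).reindex 2 ![1, 0]).ex.of_iff fun u => by simp [Part.dom_iff_mem]
  obtain ⟨σ, _, P, o, hP⟩ := (dom ![0] (Function.injective_of_subsingleton _)).exists_program
  exact ⟨σ, inferInstance, P, o, fun n => (hP _).trans (by simp)⟩

theorem shin_plus_undecidable_general : ∃ RIA : List (Role × Role),
    ¬ ∃ f : ℕ → Bool, Computable f ∧ ∀ C : DLConcept, C.IsSHINplus →
      (f C.code = true ↔ Satisfiable evenRp RIA C) := by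
  let halt : ℕ →. ℕ := fun n => (Denumerable.ofNat Nat.Partrec.Code n).eval 0
  have partrec_halt : Nat.Partrec halt := Partrec.nat_iff.1
    (Nat.Partrec.Code.eval_part.comp (Computable.ofNat _) (Computable.const 0))
  obtain ⟨σ, _, P, o, hP⟩ := exists_program_of_partrec partrec_halt
  refine ⟨gridHierarchy (Fin 6), fun ⟨f, hf, decides⟩ => ?_⟩
  have computable_decider : Computable fun c : Nat.Partrec.Code =>
      f (refutationConcept P o 0 (Encodable.encode c)).code :=
    hf.comp ((primrec_code_refutationConcept P o 0).to_comp.comp Computable.encode)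
  have decides_not_dom (c : Nat.Partrec.Code) :
      f (refutationConcept P o 0 (Encodable.encode c)).code = true ↔ ¬ (c.eval 0).Dom := by
    rw [decides _ (isSHINplus_refutationConcept P o 0 _), satisfiable_refutationConcept_iff, hP]
    simp [halt]
  have computablePred_not_dom : ComputablePred fun c : Nat.Partrec.Code => ¬ (c.eval 0).Dom :=
    ComputablePred.computable_iff.2
      ⟨_, computable_decider, funext fun c => propext (decides_not_dom c).symm⟩
  exact ComputablePred.halting_problem_not_re 0 computablePred_not_dom.to_re

end Reduction

/-- **Undecidability of unrestricted SHIN.** Over the fixed,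
effectively encoded signature, there is no computable function deciding
satisfiability of SHIN⁺-concepts w.r.t. role hierarchies. -/
theorem shin_plus_undecidable :
    ¬ ∃ f : ℕ → Bool, Computable f ∧
      ∀ (C : DLConcept) (RIA : List (Role × Role)), C.IsSHINplus →
        (f (Nat.pair C.code (riaCode RIA)) = true ↔ Satisfiable evenRp RIA C) := by
  rintro ⟨f, hf, decides⟩
  obtain ⟨RIA, undecidable⟩ := shin_plus_undecidable_general
  exact undecidable ⟨fun n => f (Nat.pair n (riaCode RIA)),
    hf.comp (Primrec₂.natPair.to_comp.comp .id (.const _)), fun C => decides C RIA⟩
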